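/- For l ∈ ℕ, l ≥ 1, let K_l : [0,∞) → [0,1] be the folding map K_l(x) = lx − 2i on [2i/l, (2i+1)/l] and K_l(x) = −lx + 2i on [(2i−1)/l, 2i/l]. Let p ∈ L¹[0,∞) be any probability density (p ≥ 0, ∫_{[0,∞)} p = 1), and let d_l be the Radon–Nikodym derivative with respect to Lebesgue measure of the pushforward under K_l of the measure with density p. Then ∫_{[0,1]} |d_l(x) − 1| dx → 0 as l → ∞. -/

import Mathlib

open MeasureTheory Filter Topology

/-- The folding map `K_l : [0,∞) → [0,1]`, `K_l(x) = lx − 2i` on `[2i/l,(2i+1)/l]`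
and `K_l(x) = −lx + 2i` on `[(2i−1)/l, 2i/l]`; equivalently
`K_l(x) = 1 − |((lx) mod 2) − 1|`. -/
noncomputable def foldMap (l : ℕ) (x : ℝ) : ℝ :=
  1 - |2 * Int.fract ((l : ℝ) * x / 2) - 1|


lemma foldMap_measurable (l : ℕ) : Measurable (foldMap l) := by
  unfold foldMap
  have h : Measurable (fun x : ℝ => Int.fract ((l : ℝ) * x / 2)) :=
    measurable_fract.comp (by fun_prop)
  have h2 : Measurable (fun x : ℝ => |2 * Int.fract ((l : ℝ) * x / 2) - 1|) :=
    ((h.const_mul 2).sub_const 1).abs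
  exact h2.const_sub 1

lemma foldMap_periodic (l : ℕ) (hl : 0 < l) : Function.Periodic (foldMap l) (2 / l) := by
  intro x
  unfold foldMap
  have : (l : ℝ) * (x + 2 / l) / 2 = (l : ℝ) * x / 2 + 1 := by
    have : (l : ℝ) ≠ 0 := by positivity
    field_simp
  rw [this, Int.fract_add_one]

lemma foldMap_cases (l : ℕ) (x : ℝ) :
    ∃ n : ℤ, foldMap l x = l * x - n ∨ foldMap l x = n - l * x := by
  unfold foldMap Int.fract
  rcases abs_cases (2 * ((l : ℝ) * x / 2 - ⌊(l : ℝ) * x / 2⌋) - 1) with ⟨h, -⟩ | ⟨h, -⟩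
  · refine ⟨2 + 2 * ⌊(l : ℝ) * x / 2⌋, Or.inr ?_⟩
    rw [h]; push_cast; ring
  · refine ⟨2 * ⌊(l : ℝ) * x / 2⌋, Or.inl ?_⟩
    rw [h]; push_cast; ring

lemma affine_null (a b : ℝ) (ha : a ≠ 0) (N : Set ℝ) (hN : volume N = 0) :
    volume ((fun x => a * x + b) ⁻¹' N) = 0 := by
  have : (fun x => a * x + b) ⁻¹' N = (fun x => a * x) ⁻¹' ((fun x => x + b) ⁻¹' N) := rfl
  rw [this, Real.volume_preimage_mul_left ha, measure_preimage_add_right, hN, mul_zero]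

lemma foldMap_null (l : ℕ) (hl : 0 < l) (N : Set ℝ) (hN : volume N = 0) :
    volume (foldMap l ⁻¹' N) = 0 := by
  have hl' : (l : ℝ) ≠ 0 := by positivity
  have hsub : foldMap l ⁻¹' N ⊆ ⋃ n : ℤ, (((fun x => (l : ℝ) * x + (-n)) ⁻¹' N) ∪
      ((fun x => (-(l : ℝ)) * x + n) ⁻¹' N)) := by
    intro x hx
    obtain ⟨n, h | h⟩ := foldMap_cases l x
    · refine Set.mem_iUnion.2 ⟨n, Or.inl ?_⟩
      have e : (l : ℝ) * x + (-n) = foldMap l x := by rw [h]; ring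
      simpa only [Set.mem_preimage, e] using hx
    · refine Set.mem_iUnion.2 ⟨n, Or.inr ?_⟩
      have e : (-(l : ℝ)) * x + n = foldMap l x := by rw [h]; ring
      simpa only [Set.mem_preimage, e] using hx
  refine measure_mono_null hsub (measure_iUnion_null fun n => measure_union_null ?_ ?_)
  · exact affine_null _ _ hl' N hN
  · exact affine_null _ _ (neg_ne_zero.2 hl') N hN

lemma foldMap_left (t : ℝ) (h0 : 0 ≤ t) (h1 : t ≤ 1) : foldMap 1 t = t := by
  unfold foldMap
  have : Int.fract (((1 : ℕ) : ℝ) * t / 2) = t / 2 := by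
    rw [Int.fract_eq_iff]
    refine ⟨by linarith, by linarith, 0, by simp⟩
  rw [this, abs_of_nonpos (by linarith)]; ring

lemma foldMap_right (t : ℝ) (h0 : 1 ≤ t) (h1 : t < 2) : foldMap 1 t = 2 - t := by
  unfold foldMap
  have : Int.fract (((1 : ℕ) : ℝ) * t / 2) = t / 2 := by
    rw [Int.fract_eq_iff]
    refine ⟨by linarith, by linarith, 0, by simp⟩
  rw [this, abs_of_nonneg (by linarith)]; ring

lemma bdd_intervalIntegrable (g : ℝ → ℝ) (hg : Measurable g) (hb : ∀ x, |g x| ≤ 1) (a b : ℝ) :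
    IntervalIntegrable g volume a b := by
  refine (intervalIntegrable_const (c := (1 : ℝ))).mono_fun hg.aestronglyMeasurable ?_
  filter_upwards with x
  simpa using hb x

lemma fold_mean (l : ℕ) (hl : 0 < l) (g : ℝ → ℝ) (hg : Measurable g) (hb : ∀ x, |g x| ≤ 1) :
    ∫ t in (0 : ℝ)..(2 / l), g (foldMap l t) = (2 / l) * ∫ x in (0 : ℝ)..1, g x := by
  have hl' : (l : ℝ) ≠ 0 := by positivity
  have e : ∀ t, g (foldMap l t) = (fun u => g (foldMap 1 u)) ((l : ℝ) * t) := by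
    intro t; simp [foldMap]
  simp_rw [e]
  rw [intervalIntegral.integral_comp_mul_left (fun u => g (foldMap 1 u)) hl']
  have e2 : (l : ℝ) * (2 / l) = 2 := by field_simp
  rw [mul_zero, e2]
  have hI := bdd_intervalIntegrable (fun u => g (foldMap 1 u)) (hg.comp (foldMap_measurable 1))
    (fun u => hb _)
  rw [← intervalIntegral.integral_add_adjacent_intervals (hI 0 1) (hI 1 2)]
  have h1 : ∫ u in (0 : ℝ)..1, g (foldMap 1 u) = ∫ x in (0 : ℝ)..1, g x := by
    apply intervalIntegral.integral_congr
    intro u hu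
    rw [Set.uIcc_of_le zero_le_one] at hu
    simp only [foldMap_left u hu.1 hu.2]
  have h2 : ∫ u in (1 : ℝ)..2, g (foldMap 1 u) = ∫ x in (0 : ℝ)..1, g x := by
    have : ∫ u in (1 : ℝ)..2, g (foldMap 1 u) = ∫ u in (1 : ℝ)..2, g (2 - u) := by
      apply intervalIntegral.integral_congr_ae
      have : ∀ᵐ u : ℝ, u ≠ 2 := by
        simp [ae_iff]
      filter_upwards [this] with u hu2 hu
      rw [Set.uIoc_of_le (by norm_num)] at hu
      rw [foldMap_right u hu.1.le (lt_of_le_of_ne hu.2 hu2)]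
    rw [this, intervalIntegral.integral_comp_sub_left]
    norm_num
  rw [h1, h2, smul_eq_mul]
  ring

lemma translation_cont (p : ℝ → ℝ) (hp : Integrable p) (ε : ℝ) (hε : 0 < ε) :
    ∃ δ > 0, ∀ s : ℝ, |s| < δ → ∫ x, |p (s + x) - p x| < ε := by
  have : Fact ((1 : ENNReal) ≠ ⊤) := ⟨ENNReal.one_ne_top⟩
  have hm : MemLp p 1 volume := memLp_one_iff_integrable.2 hp
  have hc : Continuous (fun s : ℝ => (DomAddAct.mk s) +ᵥ (hm.toLp p)) :=
    Continuous.vadd (DomAddAct.continuous_mk) continuous_const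
  obtain ⟨δ, hδ, h⟩ := Metric.continuous_iff.1 hc 0 ε hε
  refine ⟨δ, hδ, fun s hs => ?_⟩
  have h1 := h s (by simpa using hs)
  rw [DomAddAct.mk_vadd_toLp, DomAddAct.mk_vadd_toLp, dist_eq_norm, ← MemLp.toLp_sub,
    L1.norm_eq_integral_norm] at h1
  refine lt_of_eq_of_lt (integral_congr_ae ?_) h1
  filter_upwards [MemLp.coeFn_toLp ((hm.comp_measurePreserving
    (measurePreserving_vadd s volume)).sub (hm.comp_measurePreserving
    (measurePreserving_vadd (0 : ℝ) volume)))] with x hx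
  refine Eq.trans ?_ (congrArg norm hx).symm
  simp

lemma fold_weak (p : ℝ → ℝ) (hp : Integrable p) (hnorm : ∫ x, p x = 1) (l : ℕ) (hl : 0 < l)
    (ε : ℝ) (h : ∀ s : ℝ, |s| ≤ 2 / l → ∫ x, |p (s + x) - p x| ≤ ε)
    (g : ℝ → ℝ) (hg : Measurable g) (hb : ∀ x, |g x| ≤ 1) :
    |(∫ x, g (foldMap l x) * p x) - ∫ x in (0 : ℝ)..1, g x| ≤ ε := by
  set G : ℝ → ℝ := fun x => g (foldMap l x) with hG
  have hGm : Measurable G := hg.comp (foldMap_measurable l)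
  have hGb : ∀ x, |G x| ≤ 1 := fun x => hb _
  have hGp : Function.Periodic G (2 / l) := (foldMap_periodic l hl).comp g
  have hT : (0 : ℝ) < 2 / l := by positivity
  set T : ℝ := 2 / l with hTdef
  set J : ℝ → ℝ := fun s => ∫ x, G (x + s) * p x with hJ
  set I : ℝ := ∫ x, G x * p x with hI
  -- pointwise closeness
  have hclose : ∀ s ∈ Set.uIoc 0 T, ‖J s - I‖ ≤ ε := by
    intro s hs
    rw [Set.uIoc_of_le hT.le] at hs
    have hs' : |-s| ≤ T := by rw [abs_neg, abs_of_pos hs.1]; exact hs.2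
    have e1 : J s = ∫ x, G x * p (-s + x) := by
      rw [← integral_add_right_eq_self (fun x => G x * p (-s + x)) s]
      refine integral_congr_ae (Eventually.of_forall fun x => ?_)
      simp only
      congr 2; ring
    have i1 : Integrable (fun x => p (-s + x)) := hp.comp_add_left (-s)
    have i2 : Integrable (fun x => G x * p (-s + x)) :=
      i1.bdd_mul (c := 1) hGm.aestronglyMeasurable (Eventually.of_forall hGb)
    have i3 : Integrable (fun x => G x * p x) :=
      hp.bdd_mul (c := 1) hGm.aestronglyMeasurable (Eventually.of_forall hGb)
    rw [e1, hI, ← integral_sub i2 i3]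
    refine (norm_integral_le_integral_norm _).trans ((integral_mono ?_ ?_ ?_).trans (h (-s) hs'))
    · exact (i2.sub i3).norm
    · exact (i1.sub hp).abs
    · intro x
      simp only [Real.norm_eq_abs]
      rw [← mul_sub, abs_mul]
      exact mul_le_of_le_one_left (abs_nonneg _) (hGb x)
  have hprod : Integrable (Function.uncurry fun (s x : ℝ) => G (x + s) * p x)
      ((volume.restrict (Set.uIoc 0 T)).prod volume) := by
    have i0 : Integrable (fun _ : ℝ => (1 : ℝ)) (volume.restrict (Set.uIoc 0 T)) :=
      (intervalIntegrable_iff.1 (intervalIntegrable_const (c := (1 : ℝ))))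
    have i1 := (i0.mul_prod hp).bdd_mul (f := fun z : ℝ × ℝ => G (z.2 + z.1)) (c := 1)
      (hGm.comp (measurable_snd.add measurable_fst)).aestronglyMeasurable
      (Eventually.of_forall fun z => hGb _)
    simpa [Function.uncurry_def] using i1
  have hJint : IntervalIntegrable J volume 0 T :=
    intervalIntegrable_iff.2 hprod.integral_prod_left
  have hswap : ∫ s in (0 : ℝ)..T, J s = T * ∫ x in (0 : ℝ)..1, g x := by
    rw [intervalIntegral_integral_swap hprod]
    have : ∀ x, ∫ s in (0 : ℝ)..T, G (x + s) * p x = (T * ∫ x in (0 : ℝ)..1, g x) * p x := by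
      intro x
      rw [intervalIntegral.integral_mul_const, intervalIntegral.integral_comp_add_left,
        add_zero, hGp.intervalIntegral_add_eq x 0, zero_add, fold_mean l hl g hg hb]
    simp_rw [this]
    rw [integral_const_mul, hnorm, mul_one]
  have hfin := intervalIntegral.norm_integral_le_of_norm_le_const hclose
  rw [intervalIntegral.integral_sub hJint intervalIntegrable_const, hswap,
    intervalIntegral.integral_const, sub_zero, smul_eq_mul, ← mul_sub, norm_mul,
    Real.norm_eq_abs, Real.norm_eq_abs, mul_comm] at hfin
  rw [abs_sub_comm]
  exact le_of_mul_le_mul_right hfin (abs_pos.2 hT.ne')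

lemma fold_bound (p : ℝ → ℝ) (hmeas : Measurable p) (hpos : ∀ x, 0 ≤ p x)
    (hp : Integrable p) (hnorm : ∫ x, p x = 1) (l : ℕ) (hl : 0 < l)
    (ε : ℝ) (h : ∀ s : ℝ, |s| ≤ 2 / l → ∫ x, |p (s + x) - p x| ≤ ε) :
    ∫ x in Set.Icc (0 : ℝ) 1,
        |((((volume.withDensity (fun y => ENNReal.ofReal (p y))).map
            (foldMap l)).rnDeriv volume) x).toReal - 1| ≤ ε := by
  set μ := volume.withDensity (fun y => ENNReal.ofReal (p y)) with hμ
  have : IsFiniteMeasure μ := isFiniteMeasure_withDensity_ofReal hp.2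
  have hac : μ.map (foldMap l) ≪ volume := by
    refine Measure.AbsolutelyContinuous.mk fun N hN h0 => ?_
    rw [Measure.map_apply (foldMap_measurable l) hN]
    exact withDensity_absolutelyContinuous _ _ (foldMap_null l hl N h0)
  have : IsFiniteMeasure (μ.map (foldMap l)) := Measure.isFiniteMeasure_map _ _
  set d : ℝ → ℝ := fun x => ((μ.map (foldMap l)).rnDeriv volume x).toReal with hd
  have hdm : Measurable d := (Measure.measurable_rnDeriv _ _).ennreal_toReal
  have hdi : Integrable d := Measure.integrable_toReal_rnDeriv
  set g : ℝ → ℝ := (Set.Icc (0 : ℝ) 1).indicator (fun x => if 1 ≤ d x then 1 else -1) with hg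
  have hgm : Measurable g :=
    (Measurable.ite (measurableSet_le measurable_const hdm) measurable_const
      measurable_const).indicator measurableSet_Icc
  have hgb : ∀ x, |g x| ≤ 1 := by
    intro x
    simp only [hg, Set.indicator_apply]
    split_ifs <;> simp
  have h1 : ∀ x ∈ Set.Icc (0 : ℝ) 1, |d x - 1| = d x * g x - g x := by
    intro x hx
    simp only [hg, Set.indicator_of_mem hx]
    split_ifs with hh
    · rw [abs_of_nonneg (by linarith)]; ring
    · rw [abs_of_neg (by linarith)]; ring
  have hdg : Integrable (fun x => d x * g x) :=
    hdi.mul_bdd (c := 1) hgm.aestronglyMeasurable (Eventually.of_forall hgb)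
  have hgi := (bdd_intervalIntegrable g hgm hgb 0 1)
  have h2 : ∫ x in Set.Icc (0 : ℝ) 1, d x * g x = ∫ x, g (foldMap l x) * p x := by
    rw [setIntegral_eq_integral_of_forall_compl_eq_zero
      (fun x hx => by simp [hg, Set.indicator_of_notMem hx])]
    have := integral_rnDeriv_smul hac (f := g)
    simp only [smul_eq_mul] at this
    rw [this, integral_map (foldMap_measurable l).aemeasurable hgm.aestronglyMeasurable, hμ,
      integral_withDensity_eq_integral_toReal_smul (by fun_prop)
        (Eventually.of_forall fun x => ENNReal.ofReal_lt_top)]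
    refine integral_congr_ae (Eventually.of_forall fun x => ?_)
    simp only [ENNReal.toReal_ofReal (hpos x), smul_eq_mul, mul_comm]
  rw [setIntegral_congr_fun measurableSet_Icc h1, integral_sub hdg.integrableOn
    ((intervalIntegrable_iff_integrableOn_Icc_of_le zero_le_one).1 hgi), h2,
    integral_Icc_eq_integral_Ioc, ← intervalIntegral.integral_of_le zero_le_one]
  exact (le_abs_self _).trans (fold_weak p hp hnorm l hl ε h g hgm hgb)

/-- For any probability density `p ∈ L¹[0,∞)`, the density `d_l` of
the pushforward under `K_l` of the measure with density `p` converges in `L¹[0,1]`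
to the uniform density `1` as `l → ∞`. -/
theorem foldMap_L1_convergence
    (p : ℝ → ℝ) (hmeas : Measurable p) (hpos : ∀ x, 0 ≤ p x)
    (hsupp : ∀ x < (0 : ℝ), p x = 0)
    (hint : IntegrableOn p (Set.Ici (0 : ℝ)))
    (hnorm : ∫ x in Set.Ici (0 : ℝ), p x = 1) :
    Tendsto
      (fun l : ℕ => ∫ x in Set.Icc (0 : ℝ) 1,
        |((((volume.withDensity (fun y => ENNReal.ofReal (p y))).map
            (foldMap l)).rnDeriv volume) x).toReal - 1|)
      atTop (𝓝 0) := by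
  have hz : ∀ x, x ∉ Set.Ici (0 : ℝ) → p x = 0 := fun x hx => hsupp x (by simpa using hx)
  have hp : Integrable p :=
    (integrableOn_iff_integrable_of_support_subset (fun x hx => by
      by_contra hc; exact hx (hz x hc))).1 hint
  have hn : ∫ x, p x = 1 := by
    rw [← hnorm, setIntegral_eq_integral_of_forall_compl_eq_zero hz]
  rw [Metric.tendsto_atTop]
  intro ε hε
  obtain ⟨δ, hδ, hh⟩ := translation_cont p hp (ε / 2) (by linarith)
  obtain ⟨N, hN⟩ := exists_nat_gt (2 / δ)
  refine ⟨N + 1, fun l hl => ?_⟩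
  have hl0 : 0 < l := by omega
  have hl1 : 2 / δ < (l : ℝ) := hN.trans_le (by exact_mod_cast (by omega : N ≤ l))
  have hl2 : 2 / (l : ℝ) < δ := by
    rw [div_lt_iff₀ hδ] at hl1
    rw [div_lt_iff₀ (by positivity)]
    linarith
  have hb := fold_bound p hmeas hpos hp hn l hl0 (ε / 2)
    (fun s hs => (hh s (hs.trans_lt hl2)).le)
  rw [Real.dist_eq, sub_zero, abs_of_nonneg (integral_nonneg fun x => abs_nonneg _)]
  linarith
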